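/- Let (A,ω,τ,G) be an ergodic C*-dynamical system (with K = G a group) with ω tracial, such that the product map p : G × G → G, (g,h) ↦ gh, is measurable and (g,h) ↦ ω(τ_h(a₁) τ_g(a₂) τ_{gh}(a₃) τ_g(a₄) τ_h(a₅)) is (Σ × Σ)-measurable for all a₁,...,a₅ ∈ A. Let (Λ_{1α}) and (Λ_{2α}) be Følner nets in G, indexed by the same directed set, such that (Λ_{1α}⁻¹Λ_{1α}) and (Λ_{2α}⁻¹Λ_{2α}) are also Følner nets in G. Fix a GNS representation of (A,ω) and a, b, c ∈ A with at least one of ι(a), ι(b), ι(c*) in H_v; set x_{g,h} := ι(τ_{gh}(a) τ_g(b) τ_h(c)) and γ_{g',h'} := lim_α (1/(μ(Λ_{1α})μ(Λ_{2α}))) ∫_{Λ_{1α}} ∫_{Λ_{2α}} ⟨x_{g,h}, x_{gg',hh'}⟩ dg dh. If (A,ω,τ,G) is uniformly asymptotically abelian with respect to (Λ_{1α}), then lim_α sup_{g₁,g₂ ∈ G} | (1/(μ(Λ_{1α})μ(Λ_{2α}))) ∫_{Λ_{1α}g₁} ∫_{Λ_{2α}g₂} ⟨x_{g,h}, x_{gg',hh'}⟩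 dg dh − γ_{g',h'} | = 0 for all g', h' ∈ G. -/

import Mathlib

open Filter Topology
open scoped Pointwise ComplexOrder

/-- A Følner net in a (sub)semigroup `K` of a measure group `(G, Σ, μ)`. -/
structure FolnerNetIn {G : Type*} [Group G] [MeasurableSpace G]
    (μ : MeasureTheory.Measure G) (K : Set G) where
  idx : Type
  [pre : Preorder idx]
  [ne : Nonempty idx]
  [dir : IsDirected idx (· ≤ ·)]
  Lam : idx → Set G
  meas : ∀ α, MeasurableSet (Lam α) ∧ Lam α ⊆ K
  fin : ∀ᶠ α in atTop, 0 < μ (Lam α) ∧ μ (Lam α) < ⊤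
  folner : ∀ g ∈ K, Tendsto
    (fun α => (μ (symmDiff (Lam α) (Lam α * {g}))).toReal / (μ (Lam α)).toReal)
    atTop (𝓝 0)

attribute [instance] FolnerNetIn.pre FolnerNetIn.ne FolnerNetIn.dir

open MeasureTheory

/-- Ergodicity of `(A, ω, τ, G)` along a Følner net. -/
def FolnerNetIn.ErgodicAlong
    {A : Type*} [NormedRing A] [StarRing A] [CStarRing A] [NormedAlgebra ℂ A]
    [CompleteSpace A] [StarModule ℂ A]
    {G : Type*} [CommGroup G] [MeasurableSpace G] {μ : Measure G} {K : Set G}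
    (F : FolnerNetIn μ K) (ω : A →ₗ[ℂ] ℂ) (τ : G → A ≃⋆ₐ[ℂ] A) : Prop :=
  ∀ a b : A,
    Tendsto (fun α => (μ (F.Lam α)).toReal⁻¹ • ∫ g in F.Lam α, ω (a * τ g b) ∂μ)
      atTop (𝓝 (ω a * ω b))

/-- The space `H_v` of flight vectors: the orthogonal complement of the closed span `H₀` of
the unimodular eigenvectors of the semigroup `S = {U g : g ∈ G}` of contractions. -/
noncomputable def flightVectors {G H : Type*} [NormedAddCommGroup H]
    [InnerProductSpace ℂ H] (U : G → H →L[ℂ] H) : Submodule ℂ H :=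
  ((Submodule.span ℂ {x : H | x ≠ 0 ∧ ∃ lam : G → ℂ,
      ∀ g, ‖lam g‖ = 1 ∧ U g x = lam g • x}).topologicalClosure)ᗮ

/-!
By the mean ergodic theorem, ergodicity along one Følner net means that averages of the unitaries
`U g` over any Følner family converge strongly to the projection onto the cyclic vector `j 1`, so
that the averages of `ω(c τ_g(b))` converge to `ω(c) ω(b)` uniformly over `b` in the unit ball.
Traciality turns `⟪x_{g,h}, x_{gg',hh'}⟫` into a correlation
`ω(τ_h(a₁) τ_g(a₂) τ_{gh}(a₃) τ_g(a₄))`. Moving `τ_g(a₂)` past `τ_{gh}(a₃)` costs a multiple of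
`‖[a₂, τ_h(a₃)]‖`, whose average over `h` vanishes in the limit. The remaining correlation involves
`g` only through an element of norm bounded independently of `h`, so averaging over `g` and then
over `h` gives `ω(a₁) ω(a₂ a₄) ω(a₃)`. Indexing translated Følner sets also by the translating
element makes all these limits uniform over translates.
-/

open ProbabilityTheory
open scoped symmDiff InnerProductSpace NNReal

section Averages

variable {X : Type*} [MeasurableSpace X] {μ : Measure X}

lemma integral_cond {E : Type*} [NormedAddCommGroup E] [NormedSpace ℝ E] (s : Set X) (f : X → E) :
    ∫ x, f x ∂μ[|s] = (μ s).toReal⁻¹ • ∫ x in s, f x ∂μ := by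
  rw [ProbabilityTheory.cond, integral_smul_measure, ENNReal.toReal_inv]

variable {E : Type*} [NormedAddCommGroup E] [NormedSpace ℝ E] {s t : Set X} {f : X → E} {M : ℝ}

lemma norm_setIntegral_sub_setIntegral_le (hs : MeasurableSet s) (ht : MeasurableSet t)
    (hμs : μ s ≠ ⊤) (hμt : μ t ≠ ⊤) (hf : AEStronglyMeasurable f μ) (hM : ∀ x, ‖f x‖ ≤ M) :
    ‖∫ x in s, f x ∂μ - ∫ x in t, f x ∂μ‖ ≤ M * (μ (s ∆ t)).toReal := by
  have hint {u : Set X} (hu : MeasurableSet u) (hμu : μ u ≠ ⊤) : Integrable (u.indicator f) μ :=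
    (Measure.integrableOn_of_bounded hμu hf (ae_of_all _ hM)).integrable_indicator hu
  have hdiff (x : X) : ‖s.indicator f x - t.indicator f x‖ ≤ (s ∆ t).indicator (fun _ ↦ M) x := by
    by_cases hxs : x ∈ s <;> by_cases hxt : x ∈ t <;>
      simp [hxs, hxt, Set.mem_symmDiff, hM x]
  have hst : μ (s ∆ t) ≠ ⊤ := measure_symmDiff_ne_top hμs hμt
  calc ‖∫ x in s, f x ∂μ - ∫ x in t, f x ∂μ‖
      = ‖∫ x, (s.indicator f x - t.indicator f x) ∂μ‖ := by
        rw [integral_sub (hint hs hμs) (hint ht hμt), integral_indicator hs, integral_indicator ht]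
    _ ≤ ∫ x, (s ∆ t).indicator (fun _ ↦ M) x ∂μ :=
        norm_integral_le_of_norm_le ((integrableOn_const hst).integrable_indicator (hs.symmDiff ht))
          (ae_of_all _ hdiff)
    _ = M * (μ (s ∆ t)).toReal := by
        rw [integral_indicator (hs.symmDiff ht), setIntegral_const, smul_eq_mul, mul_comm,
          Measure.real]

variable {G : Type*} [Group G] [MulAction G X] [MeasurableConstSMul G X]
  [SMulInvariantMeasure G X μ]

lemma setIntegral_smul_set (k : G) (s : Set X) (f : X → E) :
    ∫ x in k • s, f x ∂μ = ∫ x in s, f (k • x) ∂μ := by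
  rw [← (measurePreserving_smul k μ).setIntegral_preimage_emb (measurableEmbedding_const_smul k),
    Set.preimage_smul, inv_smul_smul]

lemma norm_integral_cond_smul_sub_le (hs : MeasurableSet s) (hμs : μ s ≠ ⊤)
    (hf : AEStronglyMeasurable f μ) (hM : ∀ x, ‖f x‖ ≤ M) (k : G) :
    ‖∫ x, f (k • x) ∂μ[|s] - ∫ x, f x ∂μ[|s]‖ ≤ M * (μ ((k • s) ∆ s) / μ s).toReal := by
  have hks : μ (k • s) ≠ ⊤ := by rwa [measure_smul]
  rw [integral_cond, integral_cond, ← setIntegral_smul_set, ← smul_sub, norm_smul, norm_inv,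
    Real.norm_of_nonneg ENNReal.toReal_nonneg, ENNReal.toReal_div, mul_comm, div_eq_mul_inv,
    ← mul_assoc]
  gcongr
  exact norm_setIntegral_sub_setIntegral_le (hs.const_smul k) hs hks hμs hf hM

end Averages

section FoelnerNets

lemma mul_singleton_eq_smul_set {G : Type*} [CommMonoid G] (s : Set G) (g : G) :
    s * {g} = g • s := by
  simp only [Set.mul_singleton, mul_comm, ← Set.image_smul, smul_eq_mul]

variable {G : Type*} [CommGroup G] [MeasurableSpace G] {μ : Measure G} {ι κ : Type*} {l : Filter ι}

lemma measurableConstSMul_of_measurableSet_mul_singleton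
    (h : ∀ (s : Set G) (g : G), MeasurableSet s → MeasurableSet (s * {g})) :
    MeasurableConstSMul G G where
  measurable_const_smul g s hs := by
    rw [Set.preimage_smul, ← mul_singleton_eq_smul_set]
    exact h s g⁻¹ hs

lemma smulInvariantMeasure_of_measure_mul_singleton
    (h : ∀ (s : Set G) (g : G), MeasurableSet s → μ (s * {g}) = μ s) :
    SMulInvariantMeasure G G μ where
  measure_preimage_smul g s hs := by
    rw [Set.preimage_smul, ← mul_singleton_eq_smul_set, h s g⁻¹ hs]

lemma integral_cond_smul_integral_cond_smul [SMulInvariantMeasure G G μ]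
    {E : Type*} [NormedAddCommGroup E] [NormedSpace ℝ E] (s t : Set G) (g₁ g₂ : G) (f : G → G → E) :
    ∫ h, ∫ g, f h g ∂μ[|g₂ • t] ∂μ[|g₁ • s] =
      ((μ s).toReal * (μ t).toReal)⁻¹ • ∫ h in s * {g₁}, ∫ g in t * {g₂}, f h g ∂μ ∂μ := by
  simp only [integral_cond, integral_smul, smul_smul, measure_smul, mul_singleton_eq_smul_set,
    mul_inv_rev]

lemma isFoelner_of_tendsto_toReal_div {F : ι → Set G} (hmeas : ∀ i, MeasurableSet (F i))
    (hfin : ∀ᶠ i in l, 0 < μ (F i) ∧ μ (F i) < ⊤)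
    (hF : ∀ g : G, Tendsto (fun i ↦ (μ (symmDiff (F i) (F i * {g}))).toReal / (μ (F i)).toReal) l
      (𝓝 0)) (hinv : ∀ (s : Set G) (g : G), MeasurableSet s → μ (s * {g}) = μ s) :
    IsFoelner G μ l F where
  eventually_measurableSet := .of_forall hmeas
  eventually_meas_ne_zero := hfin.mono fun _ h ↦ h.1.ne'
  eventually_meas_ne_top := hfin.mono fun _ h ↦ h.2.ne
  tendsto_meas_smul_symmDiff g := by
    have hlim := ENNReal.tendsto_ofReal (hF g)
    rw [ENNReal.ofReal_zero] at hlim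
    refine hlim.congr' ?_
    filter_upwards [hfin] with i hi
    have htrans : μ (g • F i) ≠ ⊤ := by
      rw [← mul_singleton_eq_smul_set, hinv _ _ (hmeas i)]
      exact hi.2.ne
    rw [← ENNReal.toReal_div, mul_singleton_eq_smul_set, symmDiff_comm, ENNReal.ofReal_toReal
      (ENNReal.div_ne_top (measure_symmDiff_ne_top htrans hi.2.ne) hi.1.ne')]

/-- Since `G` is commutative, translating each member of a Følner family by an arbitrary element
of `G` preserves the Følner property: uniformity over translates is a special case of convergence
along Følner families. -/
lemma isFoelner_smul_comp [MeasurableConstSMul G G] [SMulInvariantMeasure G G μ] {F : ι → Set G}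
    {l' : Filter κ} {φ : κ → ι} (hF : IsFoelner G μ l F) (hφ : Tendsto φ l' l) (t : κ → G) :
    IsFoelner G μ l' fun k ↦ t k • F (φ k) where
  eventually_measurableSet := (hφ.eventually hF.eventually_measurableSet).mono fun k h ↦
    h.const_smul (t k)
  eventually_meas_ne_zero := by
    simpa only [measure_smul] using hφ.eventually hF.eventually_meas_ne_zero
  eventually_meas_ne_top := by
    simpa only [measure_smul] using hφ.eventually hF.eventually_meas_ne_top
  tendsto_meas_smul_symmDiff g := by
    simpa only [smul_comm g, ← Set.smul_set_symmDiff, measure_smul, Function.comp_def]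
      using (hF.tendsto_meas_smul_symmDiff g).comp hφ

end FoelnerNets

section MeanErgodicTheorem

variable {𝕜 : Type*} [RCLike 𝕜] {G : Type*} [Group G] [MeasurableSpace G]
  {H : Type*} [NormedAddCommGroup H] [InnerProductSpace 𝕜 H]

lemma norm_le_of_forall_norm_inner_le {w : H} {C : ℝ} (hC : 0 ≤ C)
    (h : ∀ x, ‖⟪w, x⟫_𝕜‖ ≤ C * ‖x‖) : ‖w‖ ≤ C := by
  rw [← innerSL_apply_norm 𝕜 w]
  exact (innerSL 𝕜 w).opNorm_le_bound hC h

/-- A unitary representation of a measurable group on an inner product space, measurable in the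
weak sense that all its matrix coefficients are measurable. -/
structure IsMeasurableUnitary (V : Representation 𝕜 G H) : Prop where
  inner_map_map (g : G) (x y : H) : ⟪V g x, V g y⟫_𝕜 = ⟪x, y⟫_𝕜
  measurable_inner (x y : H) : Measurable fun g ↦ ⟪x, V g y⟫_𝕜

namespace IsMeasurableUnitary

variable {V : Representation 𝕜 G H} (hV : IsMeasurableUnitary V)

include hV

lemma norm_map (g : G) (x : H) : ‖V g x‖ = ‖x‖ := by
  rw [norm_eq_sqrt_re_inner (𝕜 := 𝕜), hV.inner_map_map, ← norm_eq_sqrt_re_inner]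

lemma norm_inner_map_le (x y : H) (g : G) : ‖⟪x, V g y⟫_𝕜‖ ≤ ‖x‖ * ‖y‖ := by
  simpa only [hV.norm_map] using norm_inner_le_norm (𝕜 := 𝕜) x (V g y)

lemma integrable_inner (ν : Measure G) [IsFiniteMeasure ν] (x y : H) :
    Integrable (fun g ↦ ⟪x, V g y⟫_𝕜) ν :=
  .of_bound (hV.measurable_inner x y).aestronglyMeasurable _
    (ae_of_all _ (hV.norm_inner_map_le x y))

lemma inner_map_of_mem_invariants {x : H} (hx : x ∈ V.invariants) (g : G) (y : H) :
    ⟪x, V g y⟫_𝕜 = ⟪x, y⟫_𝕜 := by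
  conv_lhs => rw [← hx g, hV.inner_map_map]

lemma inner_map_inv_left (g : G) (x y : H) : ⟪V g⁻¹ x, y⟫_𝕜 = ⟪x, V g y⟫_𝕜 := by
  rw [← hV.inner_map_map g, V.self_inv_apply]

lemma isClosed_invariants : IsClosed (V.invariants : Set H) := by
  have hcont (g : G) : Continuous (V g) :=
    AddMonoidHomClass.continuous_of_bound (V g) 1 fun x ↦ by rw [hV.norm_map, one_mul]
  have hinter : (V.invariants : Set H) = ⋂ g, {x | V g x = x} := by
    ext x
    simp only [SetLike.mem_coe, Representation.mem_invariants, Set.mem_iInter, Set.mem_ofPred_eq]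
  rw [hinter]
  exact isClosed_iInter fun g ↦ isClosed_eq (hcont g) continuous_id

lemma hasOrthogonalProjection_invariants [CompleteSpace H] :
    V.invariants.HasOrthogonalProjection :=
  have := hV.isClosed_invariants.completeSpace_coe
  inferInstance

/-- The weakly defined average `∫ V(g)⁻¹ dν(g)` of the adjoints of the operators `V(g)`.

The family `V(g)⁻¹` is used because the averages `∫ ⟪y, V(g) x⟫ dν(g)` are to be controlled
uniformly over `x` in a ball, for a fixed `y`. -/
noncomputable def adjointAverage [CompleteSpace H] (ν : Measure G) [IsFiniteMeasure ν] :
    H →L[𝕜] H :=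
  InnerProductSpace.continuousLinearMapOfBilin <|
    (LinearMap.mk₂'ₛₗ (starRingEnd 𝕜) (RingHom.id 𝕜) (fun y x ↦ ∫ g, ⟪y, V g x⟫_𝕜 ∂ν)
      (fun y z x ↦ by
        simp only [inner_add_left]
        exact integral_add (hV.integrable_inner ν y x) (hV.integrable_inner ν z x))
      (fun c y x ↦ by simp only [inner_smul_left, integral_const_mul, smul_eq_mul])
      (fun y x z ↦ by
        simp only [map_add, inner_add_right]
        exact integral_add (hV.integrable_inner ν y x) (hV.integrable_inner ν y z))
      (fun c y x ↦ by
        simp only [map_smul, inner_smul_right, integral_const_mul, smul_eq_mul,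
          RingHom.id_apply])).mkContinuous₂ (ν.real Set.univ) fun y x ↦ by
      rw [mul_assoc, mul_comm]
      exact norm_integral_le_of_norm_le_const (ae_of_all ν (hV.norm_inner_map_le y x))

variable [CompleteSpace H]

lemma inner_adjointAverage (ν : Measure G) [IsFiniteMeasure ν] (y x : H) :
    ⟪hV.adjointAverage ν y, x⟫_𝕜 = ∫ g, ⟪y, V g x⟫_𝕜 ∂ν :=
  InnerProductSpace.continuousLinearMapOfBilin_apply _ _ _

lemma norm_adjointAverage_apply_le (ν : Measure G) [IsZeroOrProbabilityMeasure ν] (y : H) :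
    ‖hV.adjointAverage ν y‖ ≤ ‖y‖ := by
  refine norm_le_of_forall_norm_inner_le (𝕜 := 𝕜) (norm_nonneg y) fun x ↦ ?_
  rw [inner_adjointAverage]
  exact (norm_integral_le_of_norm_le_const (ae_of_all ν (hV.norm_inner_map_le y x))).trans
    (mul_le_of_le_one_right (by positivity) measureReal_le_one)

lemma adjointAverage_apply_of_mem_invariants (ν : Measure G) [IsProbabilityMeasure ν] {y : H}
    (hy : y ∈ V.invariants) : hV.adjointAverage ν y = y :=
  ext_inner_right 𝕜 fun x ↦ by
    simp only [inner_adjointAverage, hV.inner_map_of_mem_invariants hy, integral_const,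
      probReal_univ, one_smul]

lemma orthogonal_invariants_le :
    V.invariantsᗮ ≤ (Submodule.span 𝕜 {x | ∃ g v, V g⁻¹ v - v = x}).topologicalClosure := by
  rw [← Submodule.orthogonal_orthogonal_eq_closure]
  refine Submodule.orthogonal_le fun z hz g ↦ ext_inner_left 𝕜 fun v ↦ ?_
  have horth : ⟪V g⁻¹ v - v, z⟫_𝕜 = 0 := hz _ (Submodule.subset_span ⟨g, v, rfl⟩)
  rw [← hV.inner_map_inv_left, ← sub_eq_zero, ← inner_sub_left, horth]

variable [MeasurableConstSMul G G] {μ : Measure G} [SMulInvariantMeasure G G μ]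
  {ι : Type*} {l : Filter ι} {F : ι → Set G}

lemma tendsto_adjointAverage_coboundary (hF : IsFoelner G μ l F) (k : G) (v : H) :
    Tendsto (fun i ↦ hV.adjointAverage (μ[|F i]) (V k⁻¹ v - v)) l (𝓝 0) := by
  have hratio := (ENNReal.continuousAt_toReal ENNReal.zero_ne_top).tendsto.comp
    (hF.tendsto_meas_smul_symmDiff k)
  have hlim := hratio.const_mul ‖v‖
  rw [ENNReal.toReal_zero, mul_zero] at hlim
  refine squeeze_zero_norm' ?_ hlim
  filter_upwards [hF.eventually_measurableSet, hF.eventually_meas_ne_top] with i hmeas hfin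
  refine norm_le_of_forall_norm_inner_le (𝕜 := 𝕜)
    (mul_nonneg (norm_nonneg v) ENNReal.toReal_nonneg) fun x ↦ ?_
  have hshift (g : G) : ⟪V k⁻¹ v, V g x⟫_𝕜 = ⟪v, V (k • g) x⟫_𝕜 := by
    rw [hV.inner_map_inv_left, smul_eq_mul, map_mul, Module.End.mul_apply]
  rw [map_sub, inner_sub_left, inner_adjointAverage, inner_adjointAverage, mul_right_comm]
  simp only [hshift]
  exact norm_integral_cond_smul_sub_le hmeas hfin (hV.measurable_inner v x).aestronglyMeasurable
    (hV.norm_inner_map_le v x) k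

lemma tendsto_adjointAverage_of_mem_orthogonal (hF : IsFoelner G μ l F) {x : H}
    (hx : x ∈ V.invariantsᗮ) : Tendsto (fun i ↦ hV.adjointAverage (μ[|F i]) x) l (𝓝 0) := by
  have hclosed : IsClosed {x | Tendsto (fun i ↦ hV.adjointAverage (μ[|F i]) x) l (𝓝 0)} := by
    refine Equicontinuous.isClosed_setOfPred_tendsto (f := fun _ ↦ 0)
      (LipschitzWith.uniformEquicontinuous _ 1 fun i ↦ ?_).equicontinuous continuous_const
    exact AddMonoidHomClass.lipschitz_of_bound_nnnorm _ 1 fun y ↦ by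
      rw [one_mul]
      exact hV.norm_adjointAverage_apply_le _ y
  have hspan {y : H} (hy : y ∈ Submodule.span 𝕜 {x | ∃ g v, V g⁻¹ v - v = x}) :
      Tendsto (fun i ↦ hV.adjointAverage (μ[|F i]) y) l (𝓝 0) := by
    induction hy using Submodule.span_induction with
    | mem y hy =>
      obtain ⟨k, v, rfl⟩ := hy
      exact hV.tendsto_adjointAverage_coboundary hF k v
    | zero => simpa only [map_zero] using tendsto_const_nhds
    | add y z _ _ hy hz => simpa only [map_add, add_zero] using hy.add hz
    | smul c y _ hy => simpa only [map_smul, smul_zero] using hy.const_smul c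
  exact closure_minimal (fun _ ↦ hspan) hclosed (hV.orthogonal_invariants_le hx)

theorem tendsto_adjointAverage [V.invariants.HasOrthogonalProjection] (hF : IsFoelner G μ l F)
    (x : H) :
    Tendsto (fun i ↦ hV.adjointAverage (μ[|F i]) x) l (𝓝 (V.invariants.starProjection x)) := by
  set p := V.invariants.starProjection x
  have hconst : ∀ᶠ i in l, hV.adjointAverage (μ[|F i]) p = p := by
    filter_upwards [hF.eventually_meas_ne_zero, hF.eventually_meas_ne_top] with i h0 hfin
    have := cond_isProbabilityMeasure_of_finite h0 hfin
    exact hV.adjointAverage_apply_of_mem_invariants _ (Submodule.starProjection_apply_mem _ x)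
  have horth := hV.tendsto_adjointAverage_of_mem_orthogonal hF
    (Submodule.sub_starProjection_mem_orthogonal x)
  simpa only [← map_add, p, add_sub_cancel, add_zero] using
    (tendsto_const_nhds.congr' (EventuallyEq.symm hconst)).add horth

end IsMeasurableUnitary

end MeanErgodicTheorem

section CStarDynamicalSystems

variable {A : Type*} [CStarAlgebra A]

/-- A state on a unital C⋆-algebra. -/
structure IsState (ω : A →ₗ[ℂ] ℂ) : Prop where
  nonneg (a : A) : 0 ≤ ω (star a * a)
  map_one : ω 1 = 1

lemma IsState.norm_apply_le {ω : A →ₗ[ℂ] ℂ} (hω : IsState ω) (a : A) : ‖ω a‖ ≤ ‖a‖ := by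
  let := CStarAlgebra.spectralOrder A
  have := CStarAlgebra.spectralOrderedRing A
  let f : A →ₚ[ℂ] ℂ := .mk₀ ω fun x hx ↦ by
    obtain ⟨y, rfl⟩ := CStarAlgebra.nonneg_iff_eq_star_mul_self.1 hx
    exact hω.nonneg y
  have hf_one : f 1 = 1 := hω.map_one
  have hpos : ‖f (star a * a)‖ ≤ ‖a‖ ^ 2 := by
    simpa only [hf_one, norm_one, one_mul, CStarRing.norm_star_mul_self, ← sq]
      using f.norm_apply_le_of_nonneg (star a * a) (star_mul_self_nonneg a)
  have hnorm_one : ‖f.toPreGNS 1‖ = 1 := by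
    simp [f.preGNS_norm_def, hf_one]
  have hnorm : ‖f.toPreGNS a‖ ≤ ‖a‖ := by
    rw [f.preGNS_norm_def, f.ofPreGNS_toPreGNS]
    exact Real.sqrt_le_iff.2 ⟨norm_nonneg a, (Complex.re_le_norm _).trans hpos⟩
  have hinner : ⟪f.toPreGNS 1, f.toPreGNS a⟫_ℂ = ω a := by
    simp only [f.preGNS_inner_def, f.ofPreGNS_toPreGNS, star_one, one_mul]
    rfl
  calc ‖ω a‖ = ‖⟪f.toPreGNS 1, f.toPreGNS a⟫_ℂ‖ := by rw [hinner]
    _ ≤ ‖f.toPreGNS 1‖ * ‖f.toPreGNS a‖ := norm_inner_le_norm _ _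
    _ ≤ ‖a‖ := by rwa [hnorm_one, one_mul]

/-- A C⋆-dynamical system `(A, ω, τ, G)`: an action `τ` of the group `G` on `A` by
automorphisms leaving the state `ω` invariant, with measurable correlation functions. -/
structure IsCStarDynamicalSystem {G : Type*} [Group G] [MeasurableSpace G]
    (ω : A →ₗ[ℂ] ℂ) (τ : G → A ≃⋆ₐ[ℂ] A) : Prop extends IsState ω where
  one_act (a : A) : τ 1 a = a
  act_act (g h : G) (a : A) : τ g (τ h a) = τ (g * h) a
  apply_act (g : G) (a : A) : ω (τ g a) = ω a
  measurable_correlation (a b : A) : Measurable fun g ↦ ω (a * τ g b)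

namespace IsCStarDynamicalSystem

variable {G : Type*} [Group G] [MeasurableSpace G] {ω : A →ₗ[ℂ] ℂ} {τ : G → A ≃⋆ₐ[ℂ] A}
  (hτ : IsCStarDynamicalSystem ω τ)

include hτ

lemma norm_apply_act_mul_act_le (g h : G) (c y : A) : ‖ω (τ h c * τ g y)‖ ≤ ‖c‖ * ‖y‖ :=
  calc ‖ω (τ h c * τ g y)‖ ≤ ‖τ h c * τ g y‖ := hτ.toIsState.norm_apply_le _
    _ ≤ ‖τ h c‖ * ‖τ g y‖ := norm_mul_le _ _
    _ = ‖c‖ * ‖y‖ := by rw [StarAlgEquiv.norm_map, StarAlgEquiv.norm_map]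

lemma norm_apply_mul_act_le (g : G) (c y : A) : ‖ω (c * τ g y)‖ ≤ ‖c‖ * ‖y‖ := by
  simpa only [hτ.one_act] using hτ.norm_apply_act_mul_act_le g 1 c y

lemma integrable_correlation (ν : Measure G) [IsFiniteMeasure ν] (c b : A) :
    Integrable (fun g ↦ ω (c * τ g b)) ν :=
  .of_bound (hτ.measurable_correlation c b).aestronglyMeasurable _
    (ae_of_all _ fun g ↦ hτ.norm_apply_mul_act_le g c b)

end IsCStarDynamicalSystem

/-- A GNS representation `j : A → H` of `(A, ω)` together with the operators `U g` on `H` which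
implement the action `τ`. -/
structure IsGNSRepresentation {G : Type*} (ω : A →ₗ[ℂ] ℂ) (τ : G → A ≃⋆ₐ[ℂ] A)
    {H : Type*} [NormedAddCommGroup H] [InnerProductSpace ℂ H] (j : A →ₗ[ℂ] H)
    (U : G → H →L[ℂ] H) : Prop where
  denseRange : DenseRange j
  inner_apply (a b : A) : ⟪j a, j b⟫_ℂ = ω (star a * b)
  map_act (g : G) (a : A) : U g (j a) = j (τ g a)

namespace IsGNSRepresentation

variable {G : Type*} {ω : A →ₗ[ℂ] ℂ} {τ : G → A ≃⋆ₐ[ℂ] A} {H : Type*} [NormedAddCommGroup H]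
  [InnerProductSpace ℂ H] {j : A →ₗ[ℂ] H} {U : G → H →L[ℂ] H}

lemma norm_apply_le (hj : IsGNSRepresentation ω τ j U) (hω : IsState ω) (a : A) :
    ‖j a‖ ≤ ‖a‖ := by
  rw [← sq_le_sq₀ (norm_nonneg _) (norm_nonneg _)]
  have hsq : ‖j a‖ ^ 2 = ‖ω (star a * a)‖ := by
    rw [← hj.inner_apply, ← inner_self_re_eq_norm (𝕜 := ℂ), inner_self_eq_norm_sq]
  rw [hsq, sq, ← CStarRing.norm_star_mul_self]
  exact hω.norm_apply_le _

lemma apply_star (hj : IsGNSRepresentation ω τ j U) (a : A) : ω (star a) = starRingEnd ℂ (ω a) := by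
  simpa only [hj.inner_apply, star_one, one_mul, mul_one]
    using (inner_conj_symm (𝕜 := ℂ) (j a) (j 1)).symm

variable [Group G] [MeasurableSpace G]

lemma map_one_apply (hj : IsGNSRepresentation ω τ j U) (hτ : IsCStarDynamicalSystem ω τ) (x : H) :
    U 1 x = x :=
  hj.denseRange.induction_on x (isClosed_eq (U 1).continuous continuous_id) fun a ↦ by
    rw [hj.map_act, hτ.one_act]

lemma map_mul_apply (hj : IsGNSRepresentation ω τ j U) (hτ : IsCStarDynamicalSystem ω τ)
    (g h : G) (x : H) : U (g * h) x = U g (U h x) :=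
  hj.denseRange.induction_on x
    (isClosed_eq (U (g * h)).continuous ((U g).continuous.comp (U h).continuous)) fun a ↦ by
      rw [hj.map_act, hj.map_act, hj.map_act, hτ.act_act]

/-- The unitary representation of `G` on the GNS space, given by the operators `U g`. -/
def representation (hj : IsGNSRepresentation ω τ j U) (hτ : IsCStarDynamicalSystem ω τ) :
    Representation ℂ G H where
  toFun g := (U g : H →ₗ[ℂ] H)
  map_one' := LinearMap.ext (hj.map_one_apply hτ)
  map_mul' g h := LinearMap.ext (hj.map_mul_apply hτ g h)

lemma representation_apply (hj : IsGNSRepresentation ω τ j U) (hτ : IsCStarDynamicalSystem ω τ)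
    (g : G) (x : H) : hj.representation hτ g x = U g x := rfl

variable (hj : IsGNSRepresentation ω τ j U) (hτ : IsCStarDynamicalSystem ω τ)

include hj hτ

lemma inner_map_map (g : G) (x y : H) : ⟪U g x, U g y⟫_ℂ = ⟪x, y⟫_ℂ :=
  hj.denseRange.induction_on₂ (p := fun x y ↦ ⟪U g x, U g y⟫_ℂ = ⟪x, y⟫_ℂ)
    (isClosed_eq (by fun_prop) (by fun_prop)) (fun a b ↦ by
      rw [hj.map_act, hj.map_act, hj.inner_apply, hj.inner_apply, ← map_star, ← map_mul,
        hτ.apply_act]) x y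

lemma measurable_inner (x y : H) : Measurable fun g ↦ ⟪x, U g y⟫_ℂ := by
  have happrox (x : H) : ∃ u : ℕ → A, Tendsto (fun n ↦ j (u n)) atTop (𝓝 x) := by
    obtain ⟨v, hv, hvx⟩ := mem_closure_iff_seq_limit.1 (hj.denseRange x)
    choose u hu using hv
    exact ⟨u, by simpa only [hu] using hvx⟩
  obtain ⟨u, hu⟩ := happrox x
  obtain ⟨v, hv⟩ := happrox y
  refine measurable_of_tendsto_metrizable (f := fun n g ↦ ⟪j (u n), U g (j (v n))⟫_ℂ) (fun n ↦ ?_)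
    (tendsto_pi_nhds.2 fun g ↦ hu.inner (((U g).continuous.tendsto y).comp hv))
  simpa only [hj.map_act, hj.inner_apply] using hτ.measurable_correlation (star (u n)) (v n)

lemma isMeasurableUnitary : IsMeasurableUnitary (hj.representation hτ) where
  inner_map_map := hj.inner_map_map hτ
  measurable_inner := hj.measurable_inner hτ

lemma inner_adjointAverage_apply [CompleteSpace H] (ν : Measure G) [IsFiniteMeasure ν] (a b : A) :
    ⟪(hj.isMeasurableUnitary hτ).adjointAverage ν (j a), j b⟫_ℂ = ∫ g, ω (star a * τ g b) ∂ν := by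
  simp only [IsMeasurableUnitary.inner_adjointAverage, representation_apply, hj.map_act,
    hj.inner_apply]

end IsGNSRepresentation

end CStarDynamicalSystems

section UniformErgodicity

variable {A : Type*} [CStarAlgebra A]

/-- The ergodic averages `∫ ω(c τ_g(b)) dg` over the sets `F i` converge to `ω(c) ω(b)`, uniformly
over `b` in the unit ball of `A`. The average over `F i` is the integral against `μ[|F i]`. -/
def IsUniformlyErgodicAlong {G ι : Type*} [MeasurableSpace G] (μ : Measure G) (l : Filter ι)
    (F : ι → Set G) (ω : A →ₗ[ℂ] ℂ) (τ : G → A ≃⋆ₐ[ℂ] A) : Prop :=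
  ∀ c : A, ∃ r : ι → ℝ≥0, Tendsto r l (𝓝 0) ∧
    ∀ i b, ‖∫ g, ω (c * τ g b) ∂μ[|F i] - ω c * ω b‖ ≤ r i * ‖b‖

lemma IsUniformlyErgodicAlong.tendsto {G ι : Type*} [MeasurableSpace G] {μ : Measure G}
    {l : Filter ι} {F : ι → Set G} {ω : A →ₗ[ℂ] ℂ} {τ : G → A ≃⋆ₐ[ℂ] A}
    (hF : IsUniformlyErgodicAlong μ l F ω τ) (c b : A) :
    Tendsto (fun i ↦ ∫ g, ω (c * τ g b) ∂μ[|F i]) l (𝓝 (ω c * ω b)) := by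
  obtain ⟨r, hr, hbound⟩ := hF c
  rw [tendsto_iff_norm_sub_tendsto_zero]
  refine squeeze_zero (fun _ ↦ norm_nonneg _) (fun i ↦ hbound i b) ?_
  simpa only [NNReal.coe_zero, zero_mul] using (NNReal.tendsto_coe.2 hr).mul_const ‖b‖

variable {G : Type*} [Group G] [MeasurableSpace G] [MeasurableConstSMul G G] {μ : Measure G}
  [SMulInvariantMeasure G G μ] {ω : A →ₗ[ℂ] ℂ} {τ : G → A ≃⋆ₐ[ℂ] A} {H : Type*}
  [NormedAddCommGroup H] [InnerProductSpace ℂ H] [CompleteSpace H] {j : A →ₗ[ℂ] H}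
  {U : G → H →L[ℂ] H} {κ : Type*} {l₀ : Filter κ} [l₀.NeBot] {F₀ : κ → Set G}

namespace IsGNSRepresentation

lemma starProjection_invariants_apply (hj : IsGNSRepresentation ω τ j U)
    (hτ : IsCStarDynamicalSystem ω τ)
    [(hj.representation hτ).invariants.HasOrthogonalProjection] (hF₀ : IsFoelner G μ l₀ F₀)
    (hErg : ∀ a b, Tendsto (fun k ↦ ∫ g, ω (a * τ g b) ∂μ[|F₀ k]) l₀ (𝓝 (ω a * ω b))) (a : A) :
    (hj.representation hτ).invariants.starProjection (j a) = ω a • j 1 := by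
  refine hj.denseRange.eq_of_inner_left ℂ fun b ↦ ?_
  have hmean := Tendsto.inner (𝕜 := ℂ)
    ((hj.isMeasurableUnitary hτ).tendsto_adjointAverage hF₀ (j a)) (tendsto_const_nhds (x := j b))
  simp only [inner_adjointAverage_apply] at hmean
  rw [tendsto_nhds_unique hmean (hErg (star a) b), inner_smul_left, hj.inner_apply, star_one,
    one_mul, hj.apply_star]

theorem isUniformlyErgodicAlong (hj : IsGNSRepresentation ω τ j U)
    (hτ : IsCStarDynamicalSystem ω τ) (hF₀ : IsFoelner G μ l₀ F₀)
    (hErg : ∀ a b, Tendsto (fun k ↦ ∫ g, ω (a * τ g b) ∂μ[|F₀ k]) l₀ (𝓝 (ω a * ω b)))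
    {ι : Type*} {l : Filter ι} {F : ι → Set G} (hF : IsFoelner G μ l F) :
    IsUniformlyErgodicAlong μ l F ω τ := by
  intro c
  have hV := hj.isMeasurableUnitary hτ
  have := hV.hasOrthogonalProjection_invariants
  let S (i : ι) : H →L[ℂ] H := hV.adjointAverage μ[|F i]
  have hmean : Tendsto (fun i ↦ S i (j (star c))) l (𝓝 (ω (star c) • j 1)) := by
    simpa only [hj.starProjection_invariants_apply hτ hF₀ hErg] using
      hV.tendsto_adjointAverage hF (j (star c))
  refine ⟨fun i ↦ ‖S i (j (star c)) - ω (star c) • j 1‖₊, ?_, fun i b ↦ ?_⟩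
  · simpa only [sub_self, nnnorm_zero] using (hmean.sub_const (ω (star c) • j 1)).nnnorm
  have hinner : ∫ g, ω (c * τ g b) ∂μ[|F i] - ω c * ω b =
      ⟪S i (j (star c)) - ω (star c) • j 1, j b⟫_ℂ := by
    rw [inner_sub_left, hj.inner_adjointAverage_apply hτ, star_star, inner_smul_left,
      ← hj.apply_star, star_star, hj.inner_apply, star_one, one_mul]
  rw [hinner]
  exact (norm_inner_le_norm _ _).trans
    (mul_le_mul_of_nonneg_left (hj.norm_apply_le hτ.toIsState b) (norm_nonneg _))

end IsGNSRepresentation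

end UniformErgodicity

section MultipleCorrelations

lemma tendsto_integral_of_norm_sub_le {X E ι : Type*} [MeasurableSpace X] [NormedAddCommGroup E]
    [NormedSpace ℝ E] {l : Filter ι} {ν : ι → Measure X} [∀ i, IsZeroOrProbabilityMeasure (ν i)]
    {f : ι → X → E} {p : X → E} {n : X → ℝ} {s : ι → ℝ} {C : ℝ} {L : E}
    (hf : ∀ i, Integrable (f i) (ν i)) (hp : ∀ i, Integrable p (ν i))
    (hn : ∀ i, Integrable n (ν i)) (hfp : ∀ i x, ‖f i x - p x‖ ≤ C * n x + s i)
    (hn_lim : Tendsto (fun i ↦ ∫ x, n x ∂ν i) l (𝓝 0)) (hs : Tendsto s l (𝓝 0))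
    (hp_lim : Tendsto (fun i ↦ ∫ x, p x ∂ν i) l (𝓝 L)) :
    Tendsto (fun i ↦ ∫ x, f i x ∂ν i) l (𝓝 L) := by
  have hbound (i : ι) :
      ‖∫ x, f i x ∂ν i - ∫ x, p x ∂ν i‖ ≤ C * ∫ x, n x ∂ν i + ‖s i‖ := by
    have hn_add : Integrable (fun x ↦ C * n x + s i) (ν i) :=
      ((hn i).const_mul C).add (integrable_const _)
    rw [← integral_sub (hf i) (hp i)]
    refine (norm_integral_le_of_norm_le hn_add (ae_of_all _ (hfp i))).trans ?_
    rw [integral_add ((hn i).const_mul C) (integrable_const _), integral_const_mul,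
      integral_const, smul_eq_mul]
    gcongr
    exact (le_abs_self _).trans <| by
      rw [abs_mul, abs_of_nonneg measureReal_nonneg]
      exact mul_le_of_le_one_left (abs_nonneg _) measureReal_le_one
  have hbound_lim : Tendsto (fun i ↦ C * ∫ x, n x ∂ν i + ‖s i‖) l (𝓝 0) := by
    simpa only [mul_zero, norm_zero, add_zero] using (hn_lim.const_mul C).add hs.norm
  simpa only [sub_add_cancel, zero_add] using
    (squeeze_zero_norm hbound hbound_lim).add hp_lim

variable {A : Type*} [CStarAlgebra A] {G : Type*}

/-- The four-point correlation `ω(τ_h(a₁) τ_g(a₂) τ_{gh}(a₃) τ_g(a₄))`, to which the inner products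
of the vectors `x_{g,h}` reduce when `ω` is tracial. -/
noncomputable def fourPoint [Mul G] (ω : A →ₗ[ℂ] ℂ) (τ : G → A ≃⋆ₐ[ℂ] A) (a₁ a₂ a₃ a₄ : A)
    (h g : G) : ℂ :=
  ω (τ h a₁ * τ g a₂ * τ (g * h) a₃ * τ g a₄)

variable [MeasurableSpace G] {ω : A →ₗ[ℂ] ℂ} {τ : G → A ≃⋆ₐ[ℂ] A}

namespace IsCStarDynamicalSystem

lemma norm_fourPoint_le [Group G] (hτ : IsCStarDynamicalSystem ω τ) (a₁ a₂ a₃ a₄ : A) (h g : G) :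
    ‖fourPoint ω τ a₁ a₂ a₃ a₄ h g‖ ≤ ‖a₁‖ * (‖a₂‖ * ‖a₃‖ * ‖a₄‖) := by
  have hfactor : τ h a₁ * τ g a₂ * τ (g * h) a₃ * τ g a₄ = τ h a₁ * τ g (a₂ * τ h a₃ * a₄) := by
    simp only [map_mul, hτ.act_act, mul_assoc]
  rw [fourPoint, hfactor]
  refine (hτ.norm_apply_act_mul_act_le g h a₁ _).trans ?_
  gcongr
  simpa only [StarAlgEquiv.norm_map] using norm_mul₃_le (a := a₂) (b := τ h a₃) (c := a₄)

variable [CommGroup G] (hτ : IsCStarDynamicalSystem ω τ)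

include hτ

lemma apply_act_mul_act (g h : G) (a b : A) : ω (τ h a * τ g b) = ω (a * τ g (τ h⁻¹ b)) := by
  rw [← hτ.apply_act h⁻¹, map_mul, hτ.act_act, hτ.act_act, hτ.act_act, inv_mul_cancel, hτ.one_act,
    mul_comm]

lemma norm_fourPoint_sub_le (a₁ a₂ a₃ a₄ : A) (h g : G) :
    ‖fourPoint ω τ a₁ a₂ a₃ a₄ h g - ω (a₁ * τ g (τ h⁻¹ (τ h a₃ * (a₂ * a₄))))‖ ≤
      ‖a₁‖ * ‖a₄‖ * ‖a₂ * τ h a₃ - τ h a₃ * a₂‖ := by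
  have hdiff : τ h a₁ * τ g a₂ * τ (g * h) a₃ * τ g a₄ - τ h a₁ * τ g (τ h a₃ * (a₂ * a₄)) =
      τ h a₁ * τ g ((a₂ * τ h a₃ - τ h a₃ * a₂) * a₄) := by
    simp only [map_mul, map_sub, hτ.act_act]
    noncomm_ring
  rw [← hτ.apply_act_mul_act, fourPoint, ← map_sub, hdiff]
  refine (hτ.norm_apply_act_mul_act_le g h a₁ _).trans ?_
  rw [mul_assoc, mul_comm ‖a₄‖]
  gcongr
  exact norm_mul_le _ _

lemma norm_integral_fourPoint_sub_le (ν : Measure G) [IsZeroOrProbabilityMeasure ν] {r : ℝ≥0}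
    {a₁ a₂ a₃ a₄ : A} (hr : ∀ b, ‖∫ g, ω (a₁ * τ g b) ∂ν - ω a₁ * ω b‖ ≤ r * ‖b‖) (h : G)
    (hmeas : Measurable (fourPoint ω τ a₁ a₂ a₃ a₄ h)) :
    ‖∫ g, fourPoint ω τ a₁ a₂ a₃ a₄ h g ∂ν - ω a₁ * ω (τ h a₃ * (a₂ * a₄))‖ ≤
      ‖a₁‖ * ‖a₄‖ * ‖a₂ * τ h a₃ - τ h a₃ * a₂‖ + r * (‖a₃‖ * ‖a₂ * a₄‖) := by
  set b := τ h⁻¹ (τ h a₃ * (a₂ * a₄))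
  have hint : Integrable (fourPoint ω τ a₁ a₂ a₃ a₄ h) ν :=
    .of_bound hmeas.aestronglyMeasurable _ (ae_of_all _ (hτ.norm_fourPoint_le a₁ a₂ a₃ a₄ h))
  have hcomm : ‖∫ g, fourPoint ω τ a₁ a₂ a₃ a₄ h g ∂ν - ∫ g, ω (a₁ * τ g b) ∂ν‖ ≤
      ‖a₁‖ * ‖a₄‖ * ‖a₂ * τ h a₃ - τ h a₃ * a₂‖ := by
    rw [← integral_sub hint (hτ.integrable_correlation ν a₁ b)]
    refine (norm_integral_le_of_norm_le_const
      (ae_of_all _ (hτ.norm_fourPoint_sub_le a₁ a₂ a₃ a₄ h))).trans ?_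
    exact mul_le_of_le_one_right (by positivity) measureReal_le_one
  have hergodic : ‖∫ g, ω (a₁ * τ g b) ∂ν - ω a₁ * ω (τ h a₃ * (a₂ * a₄))‖ ≤
      r * (‖a₃‖ * ‖a₂ * a₄‖) := by
    rw [← hτ.apply_act h⁻¹ (τ h a₃ * (a₂ * a₄))]
    refine (hr b).trans (mul_le_mul_of_nonneg_left ?_ r.coe_nonneg)
    simpa only [b, StarAlgEquiv.norm_map] using norm_mul_le (τ h a₃) (a₂ * a₄)
  exact (norm_sub_le_norm_sub_add_norm_sub _ _ _).trans (add_le_add hcomm hergodic)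

theorem tendsto_integral_integral_fourPoint (hω : ∀ a b, ω (a * b) = ω (b * a)) {ι : Type*}
    {μ : Measure G} {l : Filter ι} {F₁ F₂ : ι → Set G} (hF₁ : IsUniformlyErgodicAlong μ l F₁ ω τ)
    (hF₂ : IsUniformlyErgodicAlong μ l F₂ ω τ) {a₁ a₂ a₃ a₄ : A}
    (hmeas : Measurable fun q : G × G ↦ fourPoint ω τ a₁ a₂ a₃ a₄ q.2 q.1)
    (hcomm_meas : Measurable fun h ↦ ‖a₂ * τ h a₃ - τ h a₃ * a₂‖)
    (hcomm : Tendsto (fun i ↦ ∫ h, ‖a₂ * τ h a₃ - τ h a₃ * a₂‖ ∂μ[|F₁ i]) l (𝓝 0)) :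
    Tendsto (fun i ↦ ∫ h, ∫ g, fourPoint ω τ a₁ a₂ a₃ a₄ h g ∂μ[|F₂ i] ∂μ[|F₁ i]) l
      (𝓝 (ω a₁ * (ω (a₂ * a₄) * ω a₃))) := by
  obtain ⟨r, hr, hbound⟩ := hF₂ a₁
  refine tendsto_integral_of_norm_sub_le (C := ‖a₁‖ * ‖a₄‖)
    (p := fun h ↦ ω a₁ * ω (τ h a₃ * (a₂ * a₄))) (s := fun i ↦ r i * (‖a₃‖ * ‖a₂ * a₄‖))
    (fun i ↦ ?_) (fun i ↦ ?_) (fun i ↦ ?_)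
    (fun i h ↦ hτ.norm_integral_fourPoint_sub_le _ (hbound i) h
      (hmeas.comp measurable_prodMk_right)) hcomm
    (by simpa only [NNReal.coe_zero, zero_mul] using (NNReal.tendsto_coe.2 hr).mul_const _) ?_
  · refine .of_bound (StronglyMeasurable.integral_prod_left'
      hmeas.stronglyMeasurable).aestronglyMeasurable (‖a₁‖ * (‖a₂‖ * ‖a₃‖ * ‖a₄‖))
      (ae_of_all _ fun h ↦ ?_)
    exact (norm_integral_le_of_norm_le_const
      (ae_of_all _ (hτ.norm_fourPoint_le a₁ a₂ a₃ a₄ h))).trans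
      (mul_le_of_le_one_right (by positivity) measureReal_le_one)
  · simpa only [hω _ (a₂ * a₄)] using
      (hτ.integrable_correlation _ (a₂ * a₄) a₃).const_mul (ω a₁)
  · refine .of_bound hcomm_meas.aestronglyMeasurable (‖a₂‖ * ‖a₃‖ + ‖a₃‖ * ‖a₂‖)
      (ae_of_all _ fun h ↦ ?_)
    rw [norm_norm, ← StarAlgEquiv.norm_map (τ h) a₃]
    exact (norm_sub_le _ _).trans (add_le_add (norm_mul_le _ _) (norm_mul_le _ _))
  · simpa only [hω _ (a₂ * a₄), integral_const_mul] using
      (hF₁.tendsto (a₂ * a₄) a₃).const_mul (ω a₁)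

end IsCStarDynamicalSystem

end MultipleCorrelations

section UniformConvergence

lemma tendstoUniformly_iff_forall_norm_sub_le {ι X E : Type*} [SeminormedAddCommGroup E]
    {F : ι → X → E} {f : X → E} {l : Filter ι} :
    TendstoUniformly F f l ↔ ∀ ε > 0, ∀ᶠ i in l, ∀ x, ‖F i x - f x‖ ≤ ε := by
  simp only [Metric.tendstoUniformly_iff, dist_comm (f _), dist_eq_norm]
  refine ⟨fun h ε hε ↦ (h ε hε).mono fun i hi x ↦ (hi x).le, fun h ε hε ↦ ?_⟩
  exact (h (ε / 2) (half_pos hε)).mono fun i hi x ↦ (hi x).trans_lt (half_lt_self hε)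

variable {A : Type*} [CStarAlgebra A] {G : Type*} [CommGroup G] [MeasurableSpace G]
  {μ : Measure G} {ω : A →ₗ[ℂ] ℂ} {τ : G → A ≃⋆ₐ[ℂ] A} {H : Type*} [NormedAddCommGroup H]
  [InnerProductSpace ℂ H] {j : A →ₗ[ℂ] H} {U : G → H →L[ℂ] H}

namespace IsGNSRepresentation

lemma inner_eq_fourPoint (hj : IsGNSRepresentation ω τ j U) (hτ : IsCStarDynamicalSystem ω τ)
    (hω : ∀ a b, ω (a * b) = ω (b * a)) (a b c : A) (g g' h h' : G) :
    ⟪j (τ (g * h) a * τ g b * τ h c),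
        j (τ (g * g' * (h * h')) a * τ (g * g') b * τ (h * h') c)⟫_ℂ =
      fourPoint ω τ (τ h' c * star c) (star b) (star a * τ (g' * h') a) (τ g' b) h g := by
  rw [hj.inner_apply, ← mul_assoc, hω, fourPoint, mul_mul_mul_comm g]
  simp only [star_mul, map_mul, map_star, hτ.act_act, mul_assoc]

variable [MeasurableConstSMul G G] [SMulInvariantMeasure G G μ] [CompleteSpace H]

theorem tendstoUniformly_integral_integral_fourPoint (hj : IsGNSRepresentation ω τ j U)
    (hτ : IsCStarDynamicalSystem ω τ) (hω : ∀ a b, ω (a * b) = ω (b * a)) {κ : Type*}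
    {l₀ : Filter κ} [l₀.NeBot] {F₀ : κ → Set G} (hF₀ : IsFoelner G μ l₀ F₀)
    (hErg : ∀ a b, Tendsto (fun k ↦ ∫ g, ω (a * τ g b) ∂μ[|F₀ k]) l₀ (𝓝 (ω a * ω b)))
    {ι : Type*} {l : Filter ι} {F₁ F₂ : ι → Set G} (hF₁ : IsFoelner G μ l F₁)
    (hF₂ : IsFoelner G μ l F₂) {a₁ a₂ a₃ a₄ : A}
    (hmeas : Measurable fun q : G × G ↦ fourPoint ω τ a₁ a₂ a₃ a₄ q.2 q.1)
    (hcomm_meas : Measurable fun h ↦ ‖a₂ * τ h a₃ - τ h a₃ * a₂‖)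
    (hcomm : TendstoUniformly
      (fun i (k : G) ↦ ∫ h, ‖a₂ * τ h a₃ - τ h a₃ * a₂‖ ∂μ[|k • F₁ i]) (fun _ ↦ 0) l) :
    TendstoUniformly
      (fun i (k : G × G) ↦
        ∫ h, ∫ g, fourPoint ω τ a₁ a₂ a₃ a₄ h g ∂μ[|k.2 • F₂ i] ∂μ[|k.1 • F₁ i])
      (fun _ ↦ ω a₁ * (ω (a₂ * a₄) * ω a₃)) l := by
  have htranslate {F : ι → Set G} (hF : IsFoelner G μ l F) (t : ι × G × G → G) :
      IsUniformlyErgodicAlong μ (l ×ˢ ⊤) (fun p : ι × G × G ↦ t p • F p.1) ω τ :=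
    hj.isUniformlyErgodicAlong hτ hF₀ hErg (isFoelner_smul_comp hF tendsto_fst t)
  have hcomm_translate : Tendsto (fun p : ι × G × G ↦
      ∫ h, ‖a₂ * τ h a₃ - τ h a₃ * a₂‖ ∂μ[|p.2.1 • F₁ p.1]) (l ×ˢ ⊤) (𝓝 0) :=
    tendsto_prod_top_iff.2 (hcomm.comp Prod.fst)
  exact tendsto_prod_top_iff.1 <| hτ.tendsto_integral_integral_fourPoint hω
    (htranslate hF₁ fun p ↦ p.2.1) (htranslate hF₂ fun p ↦ p.2.2) hmeas hcomm_meas hcomm_translate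

end IsGNSRepresentation

end UniformConvergence

theorem lemma_5_3_2_general {A : Type*} [CStarAlgebra A] {ω : A →ₗ[ℂ] ℂ}
    (hω : ∀ a b, ω (a * b) = ω (b * a)) {G : Type*} [CommGroup G] [MeasurableSpace G]
    {μ : Measure G} (hTrans : ∀ (s : Set G) (g : G), MeasurableSet s → MeasurableSet (s * {g}))
    (hRight : ∀ (s : Set G) (g : G), MeasurableSet s → μ (s * {g}) = μ s)
    {τ : G → A ≃⋆ₐ[ℂ] A} (hτ : IsCStarDynamicalSystem ω τ)
    (hcomm_meas : ∀ a b : A, Measurable fun g ↦ ‖a * τ g b - τ g b * a‖)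
    (hErg : ∃ F : FolnerNetIn μ Set.univ, F.ErgodicAlong ω τ)
    (hmeas : ∀ a₁ a₂ a₃ a₄ a₅ : A, Measurable fun q : G × G ↦
      ω (τ q.2 a₁ * τ q.1 a₂ * τ (q.1 * q.2) a₃ * τ q.1 a₄ * τ q.2 a₅))
    {ι : Type*} {l : Filter ι} [l.NeBot] {Λ1 Λ2 : ι → Set G} (hΛ1 : ∀ α, MeasurableSet (Λ1 α))
    (hΛ1fin : ∀ᶠ α in l, 0 < μ (Λ1 α) ∧ μ (Λ1 α) < ⊤)
    (hΛ1folner : ∀ g : G, Tendsto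
      (fun α ↦ (μ (symmDiff (Λ1 α) (Λ1 α * {g}))).toReal / (μ (Λ1 α)).toReal) l (𝓝 0))
    (hΛ2 : ∀ α, MeasurableSet (Λ2 α))
    (hΛ2fin : ∀ᶠ α in l, 0 < μ (Λ2 α) ∧ μ (Λ2 α) < ⊤)
    (hΛ2folner : ∀ g : G, Tendsto
      (fun α ↦ (μ (symmDiff (Λ2 α) (Λ2 α * {g}))).toReal / (μ (Λ2 α)).toReal) l (𝓝 0))
    {H : Type*} [NormedAddCommGroup H] [InnerProductSpace ℂ H] [CompleteSpace H]
    {j : A →ₗ[ℂ] H} {U : G → H →L[ℂ] H} (hj : IsGNSRepresentation ω τ j U) (a b c : A)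
    {γ : G → G → ℂ}
    (hγ : ∀ g' h' : G, Tendsto
      (fun α ↦ ((μ (Λ1 α)).toReal * (μ (Λ2 α)).toReal)⁻¹ •
        ∫ h in Λ1 α, ∫ g in Λ2 α,
          ⟪j (τ (g * h) a * τ g b * τ h c),
            j (τ (g * g' * (h * h')) a * τ (g * g') b * τ (h * h') c)⟫_ℂ ∂μ ∂μ)
      l (𝓝 (γ g' h')))
    (hUAA : ∀ a' b' : A, ∀ ε > (0 : ℝ), ∀ᶠ α in l, ∀ h : G,
      (μ (Λ1 α)).toReal⁻¹ * ∫ g in Λ1 α * {h}, ‖a' * τ g b' - τ g b' * a'‖ ∂μ ≤ ε)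
    (g' h' : G) :
    ∀ ε > (0 : ℝ), ∀ᶠ α in l, ∀ g₁ g₂ : G,
      ‖((μ (Λ1 α)).toReal * (μ (Λ2 α)).toReal)⁻¹ •
          (∫ h in Λ1 α * {g₁}, ∫ g in Λ2 α * {g₂},
            ⟪j (τ (g * h) a * τ g b * τ h c),
              j (τ (g * g' * (h * h')) a * τ (g * g') b * τ (h * h') c)⟫_ℂ ∂μ ∂μ)
        - γ g' h'‖ ≤ ε := by
  have := measurableConstSMul_of_measurableSet_mul_singleton hTrans
  have := smulInvariantMeasure_of_measure_mul_singleton hRight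
  obtain ⟨F₀, hF₀⟩ := hErg
  have hF₀_foelner := isFoelner_of_tendsto_toReal_div (fun α ↦ (F₀.meas α).1) F₀.fin
    (fun g ↦ F₀.folner g trivial) hRight
  have hF₀_erg (a b : A) :
      Tendsto (fun α ↦ ∫ g, ω (a * τ g b) ∂μ[|F₀.Lam α]) atTop (𝓝 (ω a * ω b)) := by
    simpa only [integral_cond] using hF₀ a b
  have hcomm (a b : A) : TendstoUniformly
      (fun α (k : G) ↦ ∫ h, ‖a * τ h b - τ h b * a‖ ∂μ[|k • Λ1 α]) (fun _ ↦ 0) l := by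
    refine tendstoUniformly_iff_forall_norm_sub_le.2 fun ε hε ↦ (hUAA a b ε hε).mono fun α hα k ↦ ?_
    rw [sub_zero, Real.norm_of_nonneg (integral_nonneg fun _ ↦ norm_nonneg _), integral_cond,
      measure_smul, ← mul_singleton_eq_smul_set]
    exact hα k
  have hlim := hj.tendstoUniformly_integral_integral_fourPoint hτ hω hF₀_foelner hF₀_erg
    (isFoelner_of_tendsto_toReal_div hΛ1 hΛ1fin hΛ1folner hRight)
    (isFoelner_of_tendsto_toReal_div hΛ2 hΛ2fin hΛ2folner hRight)
    (by simpa only [fourPoint, map_one, mul_one] using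
      hmeas (τ h' c * star c) (star b) (star a * τ (g' * h') a) (τ g' b) 1)
    (hcomm_meas _ _) (hcomm _ _)
  simp only [← hj.inner_eq_fourPoint hτ hω, integral_cond_smul_integral_cond_smul] at hlim
  have hγ_eq := tendsto_nhds_unique (hγ g' h')
    (by simpa only [Set.singleton_one, mul_one] using hlim.tendsto_at (1, 1))
  intro ε hε
  filter_upwards [tendstoUniformly_iff_forall_norm_sub_le.1 hlim ε hε] with α hα g₁ g₂
  rw [hγ_eq]
  exact hα (g₁, g₂)

/-- **Lemma 5.3(2).** -/
theorem lemma_5_3_2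
    -- a unital C*-algebra A
    {A : Type*} [NormedRing A] [StarRing A] [CStarRing A] [NormedAlgebra ℂ A]
    [CompleteSpace A] [StarModule ℂ A]
    -- a tracial state ω on A
    (ω : A →ₗ[ℂ] ℂ) (hω_pos : ∀ a : A, 0 ≤ ω (star a * a)) (hω_one : ω 1 = 1)
    (hω_tracial : ∀ a b : A, ω (a * b) = ω (b * a))
    -- a right invariant measure group (G, Σ, μ) with G abelian
    {G : Type*} [CommGroup G] [MeasurableSpace G] (μ : Measure G)
    (hTrans : ∀ (V : Set G) (g : G), MeasurableSet V → MeasurableSet (V * {g}))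
    (hRight : ∀ (V : Set G) (g : G), MeasurableSet V → μ (V * {g}) = μ V)
    (hInvMeas : Measurable (fun g : G => g⁻¹))
    (hInvInv : ∀ V : Set G, MeasurableSet V → μ V⁻¹ = μ V)
    -- the product map p : G × G → G is measurable
    (hProdMeas : Measurable fun q : G × G => q.1 * q.2)
    -- the action τ, making (A, ω, τ, G) a C*-dynamical system (here K = G)
    (τ : G → A ≃⋆ₐ[ℂ] A)
    (hτ_one : ∀ a : A, τ 1 a = a)
    (hτ_mul : ∀ g h a, τ g (τ h a) = τ (g * h) a)
    (hω_inv : ∀ g a, ω (τ g a) = ω a)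
    (hτ_meas : ∀ a b : A, Measurable fun g : G => ω (a * τ g b))
    -- g ↦ ‖[a, τ_g(b)]‖ is measurable
    (hcomm_meas : ∀ a b : A, Measurable fun g : G => ‖a * τ g b - τ g b * a‖)
    -- the system is ergodic (w.r.t. some, equivalently every, Følner net in G)
    (hErg : ∃ F : FolnerNetIn μ (Set.univ : Set G), F.ErgodicAlong ω τ)
    -- (g,h) ↦ ω(τ_h(a₁) τ_g(a₂) τ_{gh}(a₃) τ_g(a₄) τ_h(a₅)) is (Σ × Σ)-measurable
    (hmeas5 : ∀ a₁ a₂ a₃ a₄ a₅ : A, Measurable fun q : G × G =>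
      ω (τ q.2 a₁ * τ q.1 a₂ * τ (q.1 * q.2) a₃ * τ q.1 a₄ * τ q.2 a₅))
    -- Følner nets (Λ1 α), (Λ2 α) in G indexed by the same directed set
    {ι : Type*} [Preorder ι] [Nonempty ι] [IsDirected ι (· ≤ ·)]
    (Λ1 Λ2 : ι → Set G)
    (hΛ1 : ∀ α, MeasurableSet (Λ1 α))
    (hΛ1fin : ∀ᶠ α in atTop, 0 < μ (Λ1 α) ∧ μ (Λ1 α) < ⊤)
    (hΛ1folner : ∀ g : G, Tendsto
      (fun α => (μ (symmDiff (Λ1 α) (Λ1 α * {g}))).toReal / (μ (Λ1 α)).toReal) atTop (𝓝 0))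
    (hΛ2 : ∀ α, MeasurableSet (Λ2 α))
    (hΛ2fin : ∀ᶠ α in atTop, 0 < μ (Λ2 α) ∧ μ (Λ2 α) < ⊤)
    (hΛ2folner : ∀ g : G, Tendsto
      (fun α => (μ (symmDiff (Λ2 α) (Λ2 α * {g}))).toReal / (μ (Λ2 α)).toReal) atTop (𝓝 0))
    -- the nets (Λ1 α⁻¹ Λ1 α) and (Λ2 α⁻¹ Λ2 α) are also Følner in G
    (hΛ1inv : ∀ᶠ α in atTop, MeasurableSet ((Λ1 α)⁻¹ * Λ1 α))
    (hΛ1invfin : ∀ᶠ α in atTop, 0 < μ ((Λ1 α)⁻¹ * Λ1 α) ∧ μ ((Λ1 α)⁻¹ * Λ1 α) < ⊤)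
    (hΛ1invfolner : ∀ g : G, Tendsto
      (fun α => (μ (symmDiff ((Λ1 α)⁻¹ * Λ1 α) (((Λ1 α)⁻¹ * Λ1 α) * {g}))).toReal /
        (μ ((Λ1 α)⁻¹ * Λ1 α)).toReal) atTop (𝓝 0))
    (hΛ2inv : ∀ᶠ α in atTop, MeasurableSet ((Λ2 α)⁻¹ * Λ2 α))
    (hΛ2invfin : ∀ᶠ α in atTop, 0 < μ ((Λ2 α)⁻¹ * Λ2 α) ∧ μ ((Λ2 α)⁻¹ * Λ2 α) < ⊤)
    (hΛ2invfolner : ∀ g : G, Tendsto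
      (fun α => (μ (symmDiff ((Λ2 α)⁻¹ * Λ2 α) (((Λ2 α)⁻¹ * Λ2 α) * {g}))).toReal /
        (μ ((Λ2 α)⁻¹ * Λ2 α)).toReal) atTop (𝓝 0))
    -- a GNS representation (H, j) of (A, ω), with U the GNS representation of τ
    {H : Type*} [NormedAddCommGroup H] [InnerProductSpace ℂ H] [CompleteSpace H]
    (j : A →ₗ[ℂ] H) (hj_dense : DenseRange j)
    (hj_inner : ∀ a b : A, (inner ℂ (j a) (j b) : ℂ) = ω (star a * b))
    (U : G → H →L[ℂ] H) (hU : ∀ g a, U g (j a) = j (τ g a)) (hU_contr : ∀ g, ‖U g‖ ≤ 1)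
    -- a, b, c ∈ A with at least one of ι(a), ι(b), ι(c*) a flight vector
    (a b c : A)
    (hflight : j a ∈ flightVectors U ∨ j b ∈ flightVectors U ∨ j (star c) ∈ flightVectors U)
    -- γ_{g',h'} is the limit of the correlation averages of x_{g,h} = ι(τ_{gh}(a) τ_g(b) τ_h(c))
    (γ : G → G → ℂ)
    (hγ : ∀ g' h' : G, Tendsto
      (fun α => ((μ (Λ1 α)).toReal * (μ (Λ2 α)).toReal)⁻¹ •
        ∫ h in Λ1 α, ∫ g in Λ2 α,
          (inner ℂ (j (τ (g * h) a * τ g b * τ h c))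
            (j (τ (g * g' * (h * h')) a * τ (g * g') b * τ (h * h') c)) : ℂ) ∂μ ∂μ)
      atTop (𝓝 (γ g' h')))
    -- the system is uniformly asymptotically abelian with respect to (Λ1 α) (ε-form)
    (hUAA : ∀ a' b' : A, ∀ ε > (0 : ℝ), ∀ᶠ α in atTop, ∀ h : G,
      (μ (Λ1 α)).toReal⁻¹ * ∫ g in Λ1 α * {h}, ‖a' * τ g b' - τ g b' * a'‖ ∂μ ≤ ε) :
    -- conclusion, with the `lim sup = 0` expressed in ε-form
    ∀ g' h' : G, ∀ ε > (0 : ℝ), ∀ᶠ α in atTop, ∀ g₁ g₂ : G,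
      ‖((μ (Λ1 α)).toReal * (μ (Λ2 α)).toReal)⁻¹ •
          (∫ h in Λ1 α * {g₁}, ∫ g in Λ2 α * {g₂},
            (inner ℂ (j (τ (g * h) a * τ g b * τ h c))
              (j (τ (g * g' * (h * h')) a * τ (g * g') b * τ (h * h') c)) : ℂ) ∂μ ∂μ)
        - γ g' h'‖ ≤ ε := by
  let _ : CStarAlgebra A := {}
  exact lemma_5_3_2_general hω_tracial hTrans hRight
    ⟨⟨hω_pos, hω_one⟩, hτ_one, hτ_mul, hω_inv, hτ_meas⟩ hcomm_meas hErg hmeas5 hΛ1 hΛ1fin hΛ1folner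
    hΛ2 hΛ2fin hΛ2folner ⟨hj_dense, hj_inner, hU⟩ a b c hγ hUAA
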